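/- Operadic Stokes law for Gerstenhaber brackets: for every bilinear map μ ∈ C² and all multilinear maps h ∈ C^m, f ∈ C^n, g ∈ C^p, δ_μ⟨h|fg⟩ − ⟨h|f(δ_μ g)⟩ − (−1)^{|g|}⟨h|(δ_μ f)g⟩ − (−1)^{|g|+|f|}⟨(δ_μ h)|fg⟩ = (−1)^{|g|} ([h,f] ⌣ g + (−1)^{|h| n} f ⌣ [h,g] − [h, f ⌣ g]), where |h| = m − 1, |f| = n − 1, |g| = p − 1. -/

import Mathlib

open Finset

section OperadPrelude

variable {K : Type*} [CommRing K] {L : Type*} [AddCommGroup L] [Module K L]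

/-- `C K L n`: the `K`-module of `n`-multilinear maps `L^n → L`
(the degree-`n` component of the endomorphism operad of `L`). -/
abbrev C (K L : Type*) [CommRing K] [AddCommGroup L] [Module K L] (n : ℕ) :=
  MultilinearMap K (fun _ : Fin n => L) L

/-- The extension of an `n`-ary multilinear operation to sequences `ℕ → L`:
it evaluates `f` on the first `n` entries of the sequence.  Two `n`-ary
multilinear operations are equal iff their extensions are equal, so operadic
identities are stated as identities between extensions. -/
def ex {n : ℕ} (f : C K L n) : (ℕ → L) → L := fun x => f fun j => x j.1

/-- The sign `(-1)^e` for an integer exponent `e`. -/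
def sgn (e : ℤ) : ℤ := (((-1 : ℤˣ) ^ e : ℤˣ) : ℤ)

/-- Partial composition `f ∘ᵢ g`, where `n = deg g`:
`(f ∘ᵢ g)(x₀, x₁, …) = (-1)^{i(n-1)} f(x₀,…,x_{i-1}, g(x_i,…,x_{i+n-1}), x_{i+n},…)`. -/
def pc (n i : ℕ) (f g : (ℕ → L) → L) : (ℕ → L) → L :=
  fun x => sgn ((i : ℤ) * ((n : ℤ) - 1)) •
    f fun j => if j < i then x j else if j = i then g (fun k => x (i + k)) else x (j + n - 1)

/-- Total composition `f ∘ g := Σ_{i=0}^{m-1} f ∘ᵢ g`, where `m = deg f`, `n = deg g`. -/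
def tc (m n : ℕ) (f g : (ℕ → L) → L) : (ℕ → L) → L :=
  fun x => ∑ i ∈ Finset.range m, pc n i f g x

/-- The associator `(h, f, g) := (h ∘ f) ∘ g − h ∘ (f ∘ g)` of the total composition,
where `m = deg h`, `n = deg f`, `p = deg g`. -/
def assoc (m n p : ℕ) (h f g : (ℕ → L) → L) : (ℕ → L) → L :=
  fun x => tc (m + n - 1) p (tc m n h f) g x - tc m (n + p - 1) h (tc n p f g) x

/-- The brace `⟨h|fg⟩ := Σ (h ∘ᵢ f) ∘ⱼ g`, summed over `0 ≤ i ≤ m-2`,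
`i + n ≤ j ≤ m + n - 2`, where `m = deg h`, `n = deg f`, `p = deg g`. -/
def br2 (m n p : ℕ) (h f g : (ℕ → L) → L) : (ℕ → L) → L :=
  fun x => ∑ i ∈ Finset.range (m - 1), ∑ j ∈ Finset.Icc (i + n) (m + n - 2),
    pc p j (pc n i h f) g x

/-- The triple brace `⟨h|fgb⟩ := Σ ((h ∘ᵢ f) ∘ⱼ g) ∘ₖ b`, summed over `0 ≤ i ≤ m-3`,
`i + n ≤ j ≤ m + n - 3`, `j + p ≤ k ≤ m + n + p - 3`, where
`m = deg h`, `n = deg f`, `p = deg g`, `q = deg b`. -/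
def br3 (m n p q : ℕ) (h f g b : (ℕ → L) → L) : (ℕ → L) → L :=
  fun x => ∑ i ∈ Finset.range (m - 2), ∑ j ∈ Finset.Icc (i + n) (m + n - 3),
    ∑ k ∈ Finset.Icc (j + p) (m + n + p - 3),
      pc q k (pc p j (pc n i h f) g) b x

/-- The Gerstenhaber bracket `[f,g] := f ∘ g − (-1)^{|f||g|} g ∘ f`,
where `m = deg f`, `n = deg g`, `|f| = m - 1`, `|g| = n - 1`. -/
def gb (m n : ℕ) (f g : (ℕ → L) → L) : (ℕ → L) → L :=
  fun x => tc m n f g x - sgn (((m : ℤ) - 1) * ((n : ℤ) - 1)) • tc n m g f x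

/-- The cup product `f ⌣ g := (-1)^{deg f} (μ ∘₀ f) ∘_{deg f} g`,
where `m = deg f`, `n = deg g`. -/
def cup (μ : C K L 2) (m n : ℕ) (f g : (ℕ → L) → L) : (ℕ → L) → L :=
  fun x => sgn (m : ℤ) • pc n m (pc m 0 (ex μ) f) g x

/-- The coboundary operator `δ_μ f := −[f, μ]`, where `m = deg f`. -/
def delta (μ : C K L 2) (m : ℕ) (f : (ℕ → L) → L) : (ℕ → L) → L :=
  fun x => - gb m 2 f (ex μ) x



lemma sgn_eq_ite (e : ℤ) : sgn e = if Even e then 1 else -1 := by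
  unfold sgn
  split_ifs with h
  · rw [Even.neg_one_zpow h]; rfl
  · rw [Odd.neg_one_zpow (Int.not_even_iff_odd.mp h)]; rfl

lemma sgn_add (a b : ℤ) : sgn (a + b) = sgn a * sgn b := by
  unfold sgn
  rw [zpow_add, Units.val_mul]

lemma sgn_congr {a b : ℤ} (h : Even a ↔ Even b) : sgn a = sgn b := by
  simp only [sgn_eq_ite, h]

/-- `H` is additive in slot `i`. -/
def SlotLin (i : ℕ) (H : (ℕ → L) → L) : Prop :=
  ∀ x, ∃ φ : L →+ L, ∀ v, H (Function.update x i v) = φ v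

/-- `H` depends on the first `n` entries only. -/
def Dep (n : ℕ) (H : (ℕ → L) → L) : Prop :=
  ∀ x y : ℕ → L, (∀ k, k < n → x k = y k) → H x = H y

lemma dep_ex {n : ℕ} (f : C K L n) : Dep n (ex f) := by
  intro x y hxy
  unfold ex
  congr 1
  funext j
  exact hxy j.1 j.2

lemma slotLin_ex {n : ℕ} (f : C K L n) {i : ℕ} (hi : i < n) : SlotLin i (ex f) := by
  intro x
  refine ⟨(f.toLinearMap (fun j => x j.1) ⟨i, hi⟩).toAddMonoidHom, fun v => ?_⟩
  simp only [LinearMap.toAddMonoidHom_coe, MultilinearMap.toLinearMap_apply, ex]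
  congr 1
  funext j
  by_cases h : j = ⟨i, hi⟩
  · subst h; simp
  · have : j.1 ≠ i := fun h' => h (Fin.ext h')
    simp [Function.update_of_ne, h, this]

/-- the sequence with the block removed -/
def ins (n i : ℕ) (x : ℕ → L) : ℕ → L := fun j => if j < i then x j else x (j + n - 1)

lemma pc_eq (n i : ℕ) (H F : (ℕ → L) → L) (x : ℕ → L) :
    pc n i H F x = sgn ((i : ℤ) * ((n : ℤ) - 1)) •
      H (Function.update (ins n i x) i (F (fun k => x (i + k)))) := by
  unfold pc
  congr 2
  funext j
  unfold ins
  by_cases h : j = i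
  · subst h; simp
  · simp [Function.update_of_ne, h]

lemma slotLin_pc {n i j : ℕ} {H F : (ℕ → L) → L} (hF : Dep n F) (hij : i + n ≤ j)
    (hH : SlotLin (j + 1 - n) H) : SlotLin j (pc n i H F) := by
  intro x
  obtain ⟨φ, hφ⟩ := hH (Function.update (ins n i x) i (F (fun k => x (i + k))))
  refine ⟨sgn ((i : ℤ) * ((n : ℤ) - 1)) • φ, fun v => ?_⟩
  rw [AddMonoidHom.smul_apply, ← hφ, pc_eq]
  congr 2
  have hFx : F (fun k => Function.update x j v (i + k)) = F (fun k => x (i + k)) := by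
    apply hF
    intro k hk
    rw [Function.update_of_ne (by omega)]
  rw [hFx]
  funext a
  simp only [Function.update_apply, ins]
  by_cases h1 : a = j + 1 - n
  · subst h1
    rw [if_neg (by omega), if_neg (by omega), if_pos (by omega), if_pos rfl]
  · rw [if_neg h1]
    by_cases h2 : a = i
    · simp [h2]
    · simp only [if_neg h2]
      by_cases h3 : a < i
      · rw [if_pos h3, if_pos h3, if_neg (by omega)]
      · rw [if_neg h3, if_neg h3, if_neg (by omega)]

lemma pc_par {n p i j : ℕ} {H F : (ℕ → L) → L} (G : (ℕ → L) → L) (hF : Dep n F) (hij : i + n ≤ j) :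
    pc p j (pc n i H F) G
      = sgn (((n : ℤ) - 1) * ((p : ℤ) - 1)) • pc n i (pc p (j + 1 - n) H G) F := by
  funext x
  simp only [Pi.smul_apply, pc, smul_smul, ← sgn_add]
  have hc : ((j + 1 - n : ℕ) : ℤ) = j + 1 - n := by omega
  congr 1
  · apply congrArg
    rw [hc]; ring
  · congr 1
    funext a
    have hFx : F (fun k => if i + k < j then x (i + k) else if i + k = j then
        G (fun k => x (j + k)) else x (i + k + p - 1)) = F (fun k => x (i + k)) := by
      apply hF
      intro k hk
      rw [if_pos (by omega)]
    rw [hFx]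
    rcases lt_trichotomy a i with h | h | h
    · simp only [if_pos h]
      rw [if_pos (by omega), if_pos (by omega)]
    · subst h
      simp only [lt_irrefl, if_false, if_true]
      rw [if_pos (by omega)]
    · simp only [if_neg (show ¬ a < i by omega), if_neg (show ¬ a = i by omega)]
      rcases lt_trichotomy a (j + 1 - n) with h' | h' | h'
      · rw [if_pos (by omega), if_pos (by omega)]
      · rw [if_neg (by omega), if_pos (by omega), if_neg (by omega), if_pos (by omega)]
        congr 1
        funext k
        rw [if_neg (by omega), if_neg (by omega)]
        congr 1
        omega
      · rw [if_neg (by omega), if_neg (by omega), if_neg (by omega), if_neg (by omega),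
          if_neg (by omega), if_neg (by omega)]
        congr 1
        omega

lemma sgn_mul_self (a : ℤ) : sgn a * sgn a = 1 := by
  rw [sgn_eq_ite]; split_ifs <;> rfl

lemma pc_par' {n p i j : ℕ} {H G : (ℕ → L) → L} (F : (ℕ → L) → L) (hG : Dep p G) (hij : j < i) :
    pc p j (pc n i H F) G
      = sgn (((n : ℤ) - 1) * ((p : ℤ) - 1)) • pc n (i + p - 1) (pc p j H G) F := by
  rw [pc_par (H := H) F hG (show j + p ≤ i + p - 1 by omega), smul_smul, ← sgn_add,
    show i + p - 1 + 1 - p = i by omega, mul_comm, ← two_mul]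
  rw [sgn_eq_ite, if_pos (by simp), one_smul]

lemma pc_smul_right {n i : ℕ} {H : (ℕ → L) → L} (hH : SlotLin i H) (c : ℤ) (F : (ℕ → L) → L) :
    pc n i H (c • F) = c • pc n i H F := by
  funext x
  obtain ⟨φ, hφ⟩ := hH (ins n i x)
  simp only [Pi.smul_apply, pc_eq, hφ, map_zsmul]
  rw [smul_comm]

lemma pc_add_right {n i : ℕ} {H : (ℕ → L) → L} (hH : SlotLin i H) (F G : (ℕ → L) → L) :
    pc n i H (F + G) = pc n i H F + pc n i H G := by
  funext x
  obtain ⟨φ, hφ⟩ := hH (ins n i x)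
  simp only [Pi.add_apply, pc_eq, hφ, map_add, smul_add]

lemma pc_neg_right {n i : ℕ} {H : (ℕ → L) → L} (hH : SlotLin i H) (F : (ℕ → L) → L) :
    pc n i H (-F) = - pc n i H F := by
  have := pc_smul_right (n := n) hH (-1) F
  simpa using this

lemma pc_sub_right {n i : ℕ} {H : (ℕ → L) → L} (hH : SlotLin i H) (F G : (ℕ → L) → L) :
    pc n i H (F - G) = pc n i H F - pc n i H G := by
  rw [sub_eq_add_neg, pc_add_right hH, pc_neg_right hH, sub_eq_add_neg]

lemma pc_zero_right {n i : ℕ} {H : (ℕ → L) → L} (hH : SlotLin i H) :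
    pc n i H 0 = 0 := by
  have := pc_smul_right (n := n) hH 0 0
  simpa using this

lemma pc_sum_right {ι : Type*} {n i : ℕ} {H : (ℕ → L) → L} (hH : SlotLin i H) (s : Finset ι)
    (F : ι → (ℕ → L) → L) :
    pc n i H (∑ a ∈ s, F a) = ∑ a ∈ s, pc n i H (F a) := by
  classical
  induction s using Finset.induction_on with
  | empty => simp [pc_zero_right hH]
  | insert a s ha ih => rw [sum_insert ha, sum_insert ha, pc_add_right hH, ih]

lemma pc_add_left (n i : ℕ) (H H' F : (ℕ → L) → L) :
    pc n i (H + H') F = pc n i H F + pc n i H' F := by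
  funext x; simp [pc]

lemma pc_smul_left (n i : ℕ) (c : ℤ) (H F : (ℕ → L) → L) :
    pc n i (c • H) F = c • pc n i H F := by
  funext x; simp only [pc, Pi.smul_apply]; rw [smul_comm]

lemma pc_neg_left (n i : ℕ) (H F : (ℕ → L) → L) :
    pc n i (-H) F = - pc n i H F := by
  funext x; simp [pc]

lemma pc_sub_left (n i : ℕ) (H H' F : (ℕ → L) → L) :
    pc n i (H - H') F = pc n i H F - pc n i H' F := by
  funext x; simp [pc, smul_sub]

lemma pc_sum_left {ι : Type*} (n i : ℕ) (s : Finset ι) (H : ι → (ℕ → L) → L) (F : (ℕ → L) → L) :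
    pc n i (∑ a ∈ s, H a) F = ∑ a ∈ s, pc n i (H a) F := by
  funext x; simp [pc, Finset.sum_apply, Finset.smul_sum]

lemma pc_nest {n p i l q : ℕ} {H : (ℕ → L) → L} (F G : (ℕ → L) → L) (hl : l < n)
    (hH : SlotLin i H) (hq : n + p = q + 1) :
    pc p (i + l) (pc n i H F) G = pc q i H (pc p l F G) := by
  have hc : (q : ℤ) = n + p - 1 := by omega
  have : pc p l F G = sgn ((l : ℤ) * ((p : ℤ) - 1)) •
     (fun x => F fun j => if j < l then x j else if j = l then G (fun k => x (l + k))
       else x (j + p - 1)) := rfl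
  rw [this, pc_smul_right hH]
  funext x
  simp only [Pi.smul_apply, pc, smul_smul, ← sgn_add]
  congr 1
  · apply congrArg
    rw [hc]; push_cast; ring
  · congr 1
    funext a
    rcases lt_trichotomy a i with h | h | h
    · simp only [if_pos h]
      rw [if_pos (by omega)]
    · subst h
      simp only [lt_irrefl, if_false, if_true]
      congr 1
      funext k
      rcases lt_trichotomy k l with h' | h' | h'
      · rw [if_pos (by omega), if_pos h']
      · subst h'
        simp only [lt_irrefl, if_false, if_true, add_assoc]
      · rw [if_neg (by omega), if_neg (by omega), if_neg (by omega), if_neg (by omega)]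
        congr 1
        omega
    · simp only [if_neg (show ¬ a < i by omega), if_neg (show ¬ a = i by omega)]
      rw [if_neg (by omega), if_neg (by omega)]
      congr 1
      omega

lemma tc_eq (m n : ℕ) (H F : (ℕ → L) → L) :
    tc m n H F = ∑ i ∈ range m, pc n i H F := by
  funext x; simp [tc, Finset.sum_apply]

lemma br2_eq (m n p : ℕ) (H F G : (ℕ → L) → L) :
    br2 m n p H F G = ∑ i ∈ range (m - 1), ∑ j ∈ Icc (i + n) (m + n - 2),
      pc p j (pc n i H F) G := by
  funext x; simp [br2, Finset.sum_apply]

lemma gb_eq (m n : ℕ) (H F : (ℕ → L) → L) :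
    gb m n H F = tc m n H F - sgn (((m : ℤ) - 1) * ((n : ℤ) - 1)) • tc n m F H := rfl

lemma cup_eq (μ : C K L 2) (m n : ℕ) (F G : (ℕ → L) → L) :
    cup μ m n F G = sgn (m : ℤ) • pc n m (pc m 0 (ex μ) F) G := rfl

lemma delta_eq (μ : C K L 2) (m : ℕ) (F : (ℕ → L) → L) :
    delta μ m F = - (tc m 2 F (ex μ) - sgn (((m : ℤ) - 1) * (((2 : ℕ) : ℤ) - 1)) • tc 2 m (ex μ) F) := rfl

lemma tri {W : Type*} [AddCommMonoid W] (s : Finset ℕ) (t : ℕ → Finset ℕ) (u : ℕ → ℕ → Finset ℕ)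
    (T : ℕ → ℕ → ℕ → W) :
    ∑ i ∈ s, ∑ j ∈ t i, ∑ k ∈ u i j, T i j k
      = ∑ x ∈ s.sigma (fun i => (t i).sigma (fun j => u i j)), T x.1 x.2.1 x.2.2 := by
  simp [Finset.sum_sigma]

lemma sum_split5 {ι W : Type*} [AddCommMonoid W] (s : Finset ι) (c : ι → ℕ) (hc : ∀ x ∈ s, c x < 5)
    (T : ι → W) : ∑ x ∈ s, T x = (∑ x ∈ s with c x = 0, T x) + (∑ x ∈ s with c x = 1, T x)
      + (∑ x ∈ s with c x = 2, T x) + (∑ x ∈ s with c x = 3, T x)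
      + (∑ x ∈ s with c x = 4, T x) := by
  rw [← Finset.sum_fiberwise_of_maps_to (s := s) (t := range 5) (g := c)
    (fun x hx => by simpa using hc x hx)]
  simp only [sum_range_succ, sum_range_zero, zero_add]

lemma sum_split8 {ι W : Type*} [AddCommMonoid W] (s : Finset ι) (c : ι → ℕ) (hc : ∀ x ∈ s, c x < 8)
    (T : ι → W) : ∑ x ∈ s, T x = (∑ x ∈ s with c x = 0, T x) + (∑ x ∈ s with c x = 1, T x)
      + (∑ x ∈ s with c x = 2, T x) + (∑ x ∈ s with c x = 3, T x)
      + (∑ x ∈ s with c x = 4, T x) + (∑ x ∈ s with c x = 5, T x)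
      + (∑ x ∈ s with c x = 6, T x) + (∑ x ∈ s with c x = 7, T x) := by
  rw [← Finset.sum_fiberwise_of_maps_to (s := s) (t := range 8) (g := c)
    (fun x hx => by simpa using hc x hx)]
  simp only [sum_range_succ, sum_range_zero, zero_add]

/-- index triples of `⟨h|fg⟩ ∘ μ` -/
def sSet (m n p : ℕ) : Finset (Σ _ : ℕ, Σ _ : ℕ, ℕ) :=
  (range (m - 1)).sigma fun i => (Icc (i + n) (m + n - 2)).sigma fun _ => range (m + n + p - 2)

/-- index triples of `⟨h ∘ μ|fg⟩` -/
def tSet (m n : ℕ) : Finset (Σ _ : ℕ, Σ _ : ℕ, ℕ) :=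
  (range (m + 1 - 1)).sigma fun i => (Icc (i + n) (m + 1 + n - 2)).sigma fun _ => range m

/-- the position of the third insertion relative to the first two -/
def sCls (n p : ℕ) (x : Σ _ : ℕ, Σ _ : ℕ, ℕ) : ℕ :=
  if x.2.2 < x.1 then 0 else if x.2.2 < x.1 + n then 1 else if x.2.2 < x.2.1 then 2
    else if x.2.2 < x.2.1 + p then 3 else 4

/-- classification for `⟨h ∘ μ|fg⟩` -/
def tCls (n : ℕ) (x : Σ _ : ℕ, Σ _ : ℕ, ℕ) : ℕ :=
  if x.1 < x.2.2 then
    (if x.2.1 + 1 < x.2.2 + n then 0 else if x.2.1 + 1 = x.2.2 + n then 1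
      else if x.2.1 = x.2.2 + n then 2 else 3)
  else if x.1 = x.2.2 then (if x.2.1 = x.1 + n then 4 else 5)
  else if x.1 = x.2.2 + 1 then 6 else 7

lemma mem_sSet (m n p i j k : ℕ) : (⟨i, j, k⟩ : Σ _ : ℕ, Σ _ : ℕ, ℕ) ∈ sSet m n p ↔
    i < m - 1 ∧ (i + n ≤ j ∧ j ≤ m + n - 2) ∧ k < m + n + p - 2 := by
  simp only [sSet, mem_sigma, mem_range, mem_Icc]

lemma mem_tSet (m n i j k : ℕ) : (⟨i, j, k⟩ : Σ _ : ℕ, Σ _ : ℕ, ℕ) ∈ tSet m n ↔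
    i < m + 1 - 1 ∧ (i + n ≤ j ∧ j ≤ m + 1 + n - 2) ∧ k < m := by
  simp only [tSet, mem_sigma, mem_range, mem_Icc]

lemma sCls_0 (n p i j k : ℕ) : sCls n p ⟨i, j, k⟩ = 0 ↔ k < i := by
  simp only [sCls]; split_ifs <;> simp <;> omega

lemma sCls_1 (n p i j k : ℕ) : sCls n p ⟨i, j, k⟩ = 1 ↔ i ≤ k ∧ k < i + n := by
  simp only [sCls]; split_ifs <;> simp <;> omega

lemma sCls_2 (n p i j k : ℕ) : sCls n p ⟨i, j, k⟩ = 2 ↔ i ≤ k ∧ i + n ≤ k ∧ k < j := by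
  simp only [sCls]; split_ifs <;> simp <;> omega

lemma sCls_3 (n p i j k : ℕ) : sCls n p ⟨i, j, k⟩ = 3 ↔ i ≤ k ∧ i + n ≤ k ∧ j ≤ k ∧ k < j + p := by
  simp only [sCls]; split_ifs <;> simp <;> omega

lemma sCls_4 (n p i j k : ℕ) : sCls n p ⟨i, j, k⟩ = 4 ↔ i ≤ k ∧ i + n ≤ k ∧ j ≤ k ∧ j + p ≤ k := by
  simp only [sCls]; split_ifs <;> simp <;> omega

lemma tCls_0 (n i j k : ℕ) : tCls n ⟨i, j, k⟩ = 0 ↔ i < k ∧ j + 1 < k + n := by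
  simp only [tCls]; split_ifs <;> simp <;> omega

lemma tCls_1 (n i j k : ℕ) : tCls n ⟨i, j, k⟩ = 1 ↔ i < k ∧ j + 1 = k + n := by
  simp only [tCls]; split_ifs <;> simp <;> omega

lemma tCls_2 (n i j k : ℕ) : tCls n ⟨i, j, k⟩ = 2 ↔ i < k ∧ j = k + n := by
  simp only [tCls]; split_ifs <;> simp <;> omega

lemma tCls_3 (n i j k : ℕ) : tCls n ⟨i, j, k⟩ = 3 ↔ i < k ∧ k + n < j := by
  simp only [tCls]; split_ifs <;> simp <;> omega

lemma tCls_4 (n i j k : ℕ) : tCls n ⟨i, j, k⟩ = 4 ↔ i = k ∧ j = i + n := by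
  simp only [tCls]; split_ifs <;> simp <;> omega

lemma tCls_5 (n i j k : ℕ) : tCls n ⟨i, j, k⟩ = 5 ↔ i = k ∧ j ≠ i + n := by
  simp only [tCls]; split_ifs <;> simp <;> omega

lemma tCls_6 (n i j k : ℕ) : tCls n ⟨i, j, k⟩ = 6 ↔ i = k + 1 := by
  simp only [tCls]; split_ifs <;> simp <;> omega

lemma tCls_7 (n i j k : ℕ) : tCls n ⟨i, j, k⟩ = 7 ↔ k + 1 < i := by
  simp only [tCls]; split_ifs <;> simp <;> omega

section W
set_option linter.unusedSimpArgs false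
variable {m n p : ℕ} {H F G M : (ℕ → L) → L}

/-- sum over one class -/
def uSum (m n p : ℕ) (H F G M : (ℕ → L) → L) (c : ℕ) : (ℕ → L) → L :=
  ∑ x ∈ sSet m n p with sCls n p x = c, pc 2 x.2.2 (pc p x.2.1 (pc n x.1 H F) G) M

lemma expand_A : tc (m + n + p - 2) 2 (br2 m n p H F G) M
    = uSum m n p H F G M 0 + uSum m n p H F G M 1 + uSum m n p H F G M 2
      + uSum m n p H F G M 3 + uSum m n p H F G M 4 := by
  simp only [tc_eq, br2_eq, pc_sum_left]
  rw [sum_comm]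
  simp_rw [sum_comm (s := range (m + n + p - 2))]
  rw [tri]
  exact sum_split5 (sSet m n p) (sCls n p) (fun x _ => by unfold sCls; split_ifs <;> omega) _

lemma expand_B (hH : ∀ i, i < m → SlotLin i H) (dF : Dep n F) :
    br2 m n (p + 1) H F (tc p 2 G M) = uSum m n p H F G M 3 := by
  simp only [tc_eq, br2_eq]
  have : ∀ i ∈ range (m - 1), ∀ j ∈ Icc (i + n) (m + n - 2),
      pc (p + 1) j (pc n i H F) (∑ l ∈ range p, pc 2 l G M)
        = ∑ l ∈ range p, pc 2 (j + l) (pc p j (pc n i H F) G) M := by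
    intro i hi j hj
    simp only [mem_range, mem_Icc] at hi hj
    have hl : SlotLin j (pc n i H F) := slotLin_pc dF hj.1 (hH _ (by omega))
    rw [pc_sum_right hl]
    refine sum_congr rfl fun l hl' => ?_
    rw [pc_nest (q := p + 1) G M (mem_range.mp hl') hl (by omega)]
  rw [sum_congr rfl fun i hi => sum_congr rfl fun j hj => this i hi j hj, tri]
  refine sum_nbij' (fun x => ⟨x.1, x.2.1, x.2.1 + x.2.2⟩) (fun x => ⟨x.1, x.2.1, x.2.2 - x.2.1⟩)
    ?_ ?_ ?_ ?_ ?_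
  all_goals
    rintro ⟨i, j, k⟩ ha
    simp only [mem_filter, true_and, and_true, sCls_0, sCls_1, sCls_2, sCls_3, sCls_4,
        tCls_0, tCls_1, tCls_2, tCls_3, tCls_4, tCls_5, tCls_6, tCls_7, mem_sSet, mem_sigma, mem_range, mem_Icc, Sigma.mk.injEq,
      heq_eq_eq] at ha ⊢
    try omega

lemma expand_C (hH : ∀ i, i < m → SlotLin i H) (dM : Dep 2 M) :
    br2 m (n + 1) p H (tc n 2 F M) G = sgn ((p : ℤ) - 1) • uSum m n p H F G M 1 := by
  simp only [tc_eq, br2_eq]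
  have : ∀ i ∈ range (m - 1), ∀ j ∈ Icc (i + (n + 1)) (m + (n + 1) - 2),
      pc p j (pc (n + 1) i H (∑ l ∈ range n, pc 2 l F M)) G
        = ∑ l ∈ range n, sgn ((p : ℤ) - 1) • pc 2 (i + l) (pc p (j - 1) (pc n i H F) G) M := by
    intro i hi j hj
    simp only [mem_range, mem_Icc] at hi hj
    rw [pc_sum_right (hH i (by omega)), pc_sum_left]
    refine sum_congr rfl fun l hl' => ?_
    have hl := mem_range.mp hl'
    rw [← pc_nest (q := n + 1) F M hl (hH i (by omega)) (by omega)]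
    rw [pc_par G dM (by omega), show j + 1 - 2 = j - 1 by omega]
    congr 1
    apply sgn_congr
    simp
  rw [sum_congr rfl fun i hi => sum_congr rfl fun j hj => this i hi j hj, tri, uSum, smul_sum]
  refine sum_nbij' (fun x => ⟨x.1, x.2.1 - 1, x.1 + x.2.2⟩) (fun x => ⟨x.1, x.2.1 + 1, x.2.2 - x.1⟩)
    ?_ ?_ ?_ ?_ ?_
  all_goals
    rintro ⟨i, j, k⟩ ha
    simp only [mem_filter, true_and, and_true, sCls_0, sCls_1, sCls_2, sCls_3, sCls_4,
        tCls_0, tCls_1, tCls_2, tCls_3, tCls_4, tCls_5, tCls_6, tCls_7, mem_sSet, mem_sigma, mem_range, mem_Icc, Sigma.mk.injEq,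
      heq_eq_eq] at ha ⊢
    try omega

lemma expand_D (hH : ∀ i, i < m → SlotLin i H) (dM : Dep 2 M)
    (dF : Dep n F) (dG : Dep p G) :
    br2 (m + 1) n p (tc m 2 H M) F G
      = sgn ((n : ℤ) + p) • (uSum m n p H F G M 0 + uSum m n p H F G M 2 + uSum m n p H F G M 4)
        + sgn ((n : ℤ) - 1) • br2 m n (p + 1) H F (tc 2 p M G)
        + br2 m (n + 1) p H (tc 2 n M F) G
        + tc m (n + p) H (pc p n (pc n 0 M F) G) := by
  have hL : br2 (m + 1) n p (tc m 2 H M) F G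
      = ∑ x ∈ tSet m n, pc p x.2.1 (pc n x.1 (pc 2 x.2.2 H M) F) G := by
    simp only [tc_eq, br2_eq, pc_sum_left]
    rw [tri]
    rfl
  have hYg : br2 m n (p + 1) H F (tc 2 p M G)
      = (∑ x ∈ (range (m - 1)).sigma (fun i => Icc (i + n) (m + n - 2)),
          pc (p + 1) x.2 (pc n x.1 H F) (pc p 0 M G))
        + ∑ x ∈ (range (m - 1)).sigma (fun i => Icc (i + n) (m + n - 2)),
          pc (p + 1) x.2 (pc n x.1 H F) (pc p 1 M G) := by
    rw [← sum_add_distrib, br2_eq, sum_sigma]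
    refine sum_congr rfl fun i hi => sum_congr rfl fun j hj => ?_
    simp only [mem_range, mem_Icc] at hi hj
    have hl : SlotLin j (pc n i H F) := slotLin_pc dF hj.1 (hH _ (by omega))
    rw [tc_eq, sum_range_succ, sum_range_one, pc_add_right hl]
  have hYf : br2 m (n + 1) p H (tc 2 n M F) G
      = (∑ x ∈ (range (m - 1)).sigma (fun i => Icc (i + (n + 1)) (m + (n + 1) - 2)),
          pc p x.2 (pc (n + 1) x.1 H (pc n 0 M F)) G)
        + ∑ x ∈ (range (m - 1)).sigma (fun i => Icc (i + (n + 1)) (m + (n + 1) - 2)),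
          pc p x.2 (pc (n + 1) x.1 H (pc n 1 M F)) G := by
    rw [← sum_add_distrib, br2_eq, sum_sigma]
    refine sum_congr rfl fun i hi => sum_congr rfl fun j hj => ?_
    simp only [mem_range, mem_Icc] at hi hj
    rw [tc_eq, sum_range_succ, sum_range_one, pc_add_right (hH i (by omega)), pc_add_left]
  rw [hL, hYg, hYf, sum_split8 (tSet m n) (tCls n)
    (fun x _ => by unfold tCls; split_ifs <;> omega)]
  have r0 : (∑ x ∈ tSet m n with tCls n x = 0, pc p x.2.1 (pc n x.1 (pc 2 x.2.2 H M) F) G)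
      = sgn ((n : ℤ) + p) • uSum m n p H F G M 4 := by
    rw [uSum, smul_sum]
    refine sum_nbij' (fun x => ⟨x.1, x.2.1, x.2.2 + n + p - 2⟩)
      (fun x => ⟨x.1, x.2.1, x.2.2 + 2 - n - p⟩) ?_ ?_ ?_ ?_ ?_
    all_goals
      rintro ⟨i, j, k⟩ ha
      simp only [mem_filter, true_and, and_true, sCls_0, sCls_1, sCls_2, sCls_3, sCls_4,
        tCls_0, tCls_1, tCls_2, tCls_3, tCls_4, tCls_5, tCls_6, tCls_7, mem_sSet, mem_tSet, Sigma.mk.injEq, heq_eq_eq] at ha ⊢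
      try omega
    · have h1 : i < k ∧ j + 1 < k + n := by omega
      rw [pc_par' M dF h1.1, pc_smul_left, pc_par' M dG (by omega), smul_smul, ← sgn_add,
        show k + n - 1 + p - 1 = k + n + p - 2 by omega]
      congr 1
      apply sgn_congr
      simp [Int.even_add, Int.even_sub]
      simp only [← Nat.not_even_iff_odd]
      tauto
  have r1 : (∑ x ∈ tSet m n with tCls n x = 1, pc p x.2.1 (pc n x.1 (pc 2 x.2.2 H M) F) G)
      = sgn ((n : ℤ) - 1) • ∑ x ∈ (range (m - 1)).sigma (fun i => Icc (i + n) (m + n - 2)),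
          pc (p + 1) x.2 (pc n x.1 H F) (pc p 0 M G) := by
    rw [smul_sum]
    refine sum_nbij' (fun x => ⟨x.1, x.2.1⟩)
      (fun x => ⟨x.1, x.2, x.2 + 1 - n⟩) ?_ ?_ ?_ ?_ ?_
    on_goal 1 => rintro ⟨i, j, k⟩ ha
    on_goal 2 => rintro ⟨i, j⟩ ha
    on_goal 3 => rintro ⟨i, j, k⟩ ha
    on_goal 4 => rintro ⟨i, j⟩ ha
    on_goal 5 => rintro ⟨i, j, k⟩ ha
    all_goals
      simp only [mem_filter, true_and, and_true, sCls_0, sCls_1, sCls_2, sCls_3, sCls_4,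
        tCls_0, tCls_1, tCls_2, tCls_3, tCls_4, tCls_5, tCls_6, tCls_7, mem_sigma, mem_range, mem_Icc, mem_tSet, Sigma.mk.injEq,
        heq_eq_eq] at ha ⊢
      try omega
    · have h1 : i < k ∧ j + 1 = k + n := by omega
      have hl : SlotLin j (pc n i H F) := slotLin_pc dF (by omega) (hH _ (by omega))
      rw [pc_par' M dF h1.1, pc_smul_left, show k + n - 1 = j by omega,
        ← pc_nest (n := 2) (q := p + 1) (l := 0) M G (by omega) hl (by omega)]
      congr 1
      apply sgn_congr
      simp
  have r2 : (∑ x ∈ tSet m n with tCls n x = 2, pc p x.2.1 (pc n x.1 (pc 2 x.2.2 H M) F) G)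
      = sgn ((n : ℤ) - 1) • ∑ x ∈ (range (m - 1)).sigma (fun i => Icc (i + n) (m + n - 2)),
          pc (p + 1) x.2 (pc n x.1 H F) (pc p 1 M G) := by
    rw [smul_sum]
    refine sum_nbij' (fun x => ⟨x.1, x.2.1 - 1⟩)
      (fun x => ⟨x.1, x.2 + 1, x.2 + 1 - n⟩) ?_ ?_ ?_ ?_ ?_
    on_goal 1 => rintro ⟨i, j, k⟩ ha
    on_goal 2 => rintro ⟨i, j⟩ ha
    on_goal 3 => rintro ⟨i, j, k⟩ ha
    on_goal 4 => rintro ⟨i, j⟩ ha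
    on_goal 5 => rintro ⟨i, j, k⟩ ha
    all_goals
      simp only [mem_filter, true_and, and_true, sCls_0, sCls_1, sCls_2, sCls_3, sCls_4,
        tCls_0, tCls_1, tCls_2, tCls_3, tCls_4, tCls_5, tCls_6, tCls_7, mem_sigma, mem_range, mem_Icc, mem_tSet, Sigma.mk.injEq,
        heq_eq_eq] at ha ⊢
      try omega
    · have h1 : i < k ∧ j = k + n := by omega
      obtain ⟨j', rfl⟩ : ∃ j', j = j' + 1 := ⟨j - 1, by omega⟩
      have hl : SlotLin j' (pc n i H F) := slotLin_pc dF (by omega) (hH _ (by omega))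
      rw [pc_par' M dF h1.1, pc_smul_left, show k + n - 1 = j' by omega, Nat.add_sub_cancel,
        ← pc_nest (n := 2) (q := p + 1) (l := 1) M G (by omega) hl (by omega)]
      congr 1
      apply sgn_congr
      simp
  have r3 : (∑ x ∈ tSet m n with tCls n x = 3, pc p x.2.1 (pc n x.1 (pc 2 x.2.2 H M) F) G)
      = sgn ((n : ℤ) + p) • uSum m n p H F G M 2 := by
    rw [uSum, smul_sum]
    refine sum_nbij' (fun x => ⟨x.1, x.2.1 - 1, x.2.2 + n - 1⟩)
      (fun x => ⟨x.1, x.2.1 + 1, x.2.2 + 1 - n⟩) ?_ ?_ ?_ ?_ ?_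
    all_goals
      rintro ⟨i, j, k⟩ ha
      simp only [mem_filter, true_and, and_true, sCls_0, sCls_1, sCls_2, sCls_3, sCls_4,
        tCls_0, tCls_1, tCls_2, tCls_3, tCls_4, tCls_5, tCls_6, tCls_7, mem_sSet, mem_tSet, Sigma.mk.injEq, heq_eq_eq] at ha ⊢
      try omega
    · have h1 : i < k ∧ k + n < j := by omega
      rw [pc_par' M dF h1.1, pc_smul_left, pc_par G dM (by omega), smul_smul, ← sgn_add,
        show j + 1 - 2 = j - 1 by omega]
      congr 1
      apply sgn_congr
      simp [Int.even_add, Int.even_sub]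
      simp only [← Nat.not_even_iff_odd]
      tauto
  have r4 : (∑ x ∈ tSet m n with tCls n x = 4, pc p x.2.1 (pc n x.1 (pc 2 x.2.2 H M) F) G)
      = tc m (n + p) H (pc p n (pc n 0 M F) G) := by
    rw [tc_eq]
    refine sum_nbij' (fun x => x.1)
      (fun x => ⟨x, x + n, x⟩) ?_ ?_ ?_ ?_ ?_
    on_goal 1 => rintro ⟨i, j, k⟩ ha
    on_goal 2 => rintro i ha
    on_goal 3 => rintro ⟨i, j, k⟩ ha
    on_goal 4 => rintro i ha
    on_goal 5 => rintro ⟨i, j, k⟩ ha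
    all_goals
      simp only [mem_filter, true_and, and_true, sCls_0, sCls_1, sCls_2, sCls_3, sCls_4,
        tCls_0, tCls_1, tCls_2, tCls_3, tCls_4, tCls_5, tCls_6, tCls_7, mem_range, mem_tSet, Sigma.mk.injEq,
        heq_eq_eq] at ha ⊢
      try omega
    · have h1 : k = i ∧ j = i + n := by omega
      obtain ⟨rfl, rfl⟩ := h1
      have hk := hH k (by omega)
      have e1 := pc_nest (n := 2) (p := n) (q := n + 1) (i := k) (l := 0) M F (by omega) hk (by omega)
      rw [add_zero] at e1
      rw [e1, pc_nest (n := n + 1) (p := p) (q := n + p) _ G (by omega) hk (by omega)]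
  have r5 : (∑ x ∈ tSet m n with tCls n x = 5, pc p x.2.1 (pc n x.1 (pc 2 x.2.2 H M) F) G)
      = ∑ x ∈ (range (m - 1)).sigma (fun i => Icc (i + (n + 1)) (m + (n + 1) - 2)),
          pc p x.2 (pc (n + 1) x.1 H (pc n 0 M F)) G := by
    refine sum_nbij' (fun x => ⟨x.1, x.2.1⟩)
      (fun x => ⟨x.1, x.2, x.1⟩) ?_ ?_ ?_ ?_ ?_
    on_goal 1 => rintro ⟨i, j, k⟩ ha
    on_goal 2 => rintro ⟨i, j⟩ ha
    on_goal 3 => rintro ⟨i, j, k⟩ ha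
    on_goal 4 => rintro ⟨i, j⟩ ha
    on_goal 5 => rintro ⟨i, j, k⟩ ha
    all_goals
      simp only [mem_filter, true_and, and_true, sCls_0, sCls_1, sCls_2, sCls_3, sCls_4,
        tCls_0, tCls_1, tCls_2, tCls_3, tCls_4, tCls_5, tCls_6, tCls_7, mem_sigma, mem_range, mem_Icc, mem_tSet, Sigma.mk.injEq,
        heq_eq_eq] at ha ⊢
      try omega
    · have h1 : k = i := by omega
      subst h1
      have hk := hH k (by omega)
      have e1 := pc_nest (n := 2) (p := n) (q := n + 1) (i := k) (l := 0) M F (by omega) hk (by omega)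
      rw [add_zero] at e1
      rw [e1]
  have r6 : (∑ x ∈ tSet m n with tCls n x = 6, pc p x.2.1 (pc n x.1 (pc 2 x.2.2 H M) F) G)
      = ∑ x ∈ (range (m - 1)).sigma (fun i => Icc (i + (n + 1)) (m + (n + 1) - 2)),
          pc p x.2 (pc (n + 1) x.1 H (pc n 1 M F)) G := by
    refine sum_nbij' (fun x => ⟨x.2.2, x.2.1⟩)
      (fun x => ⟨x.1 + 1, x.2, x.1⟩) ?_ ?_ ?_ ?_ ?_
    on_goal 1 => rintro ⟨i, j, k⟩ ha
    on_goal 2 => rintro ⟨i, j⟩ ha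
    on_goal 3 => rintro ⟨i, j, k⟩ ha
    on_goal 4 => rintro ⟨i, j⟩ ha
    on_goal 5 => rintro ⟨i, j, k⟩ ha
    all_goals
      simp only [mem_filter, true_and, and_true, sCls_0, sCls_1, sCls_2, sCls_3, sCls_4,
        tCls_0, tCls_1, tCls_2, tCls_3, tCls_4, tCls_5, tCls_6, tCls_7, mem_sigma, mem_range, mem_Icc, mem_tSet, Sigma.mk.injEq,
        heq_eq_eq] at ha ⊢
      try omega
    · have h1 : i = k + 1 := by omega
      subst h1
      have hk := hH k (by omega)
      rw [pc_nest (n := 2) (p := n) (q := n + 1) (i := k) (l := 1) M F (by omega) hk (by omega)]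
  have r7 : (∑ x ∈ tSet m n with tCls n x = 7, pc p x.2.1 (pc n x.1 (pc 2 x.2.2 H M) F) G)
      = sgn ((n : ℤ) + p) • uSum m n p H F G M 0 := by
    rw [uSum, smul_sum]
    refine sum_nbij' (fun x => ⟨x.1 - 1, x.2.1 - 1, x.2.2⟩)
      (fun x => ⟨x.1 + 1, x.2.1 + 1, x.2.2⟩) ?_ ?_ ?_ ?_ ?_
    all_goals
      rintro ⟨i, j, k⟩ ha
      simp only [mem_filter, true_and, and_true, sCls_0, sCls_1, sCls_2, sCls_3, sCls_4,
        tCls_0, tCls_1, tCls_2, tCls_3, tCls_4, tCls_5, tCls_6, tCls_7, mem_sSet, mem_tSet, Sigma.mk.injEq, heq_eq_eq] at ha ⊢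
      try omega
    · have h1 : k + 1 < i := by omega
      rw [pc_par F dM (by omega), pc_smul_left, pc_par G dM (by omega), smul_smul, ← sgn_add,
        show j + 1 - 2 = j - 1 by omega, show i + 1 - 2 = i - 1 by omega]
      congr 1
      apply sgn_congr
      simp [Int.even_add, Int.even_sub]
      simp only [← Nat.not_even_iff_odd]
      tauto
  rw [r0, r1, r2, r3, r4, r5, r6, r7]
  simp only [smul_add]
  abel

lemma br2_eq' (m n p : ℕ) (H F G : (ℕ → L) → L) :
    br2 m n p H F G = ∑ i ∈ range m, ∑ j ∈ Ico (i + n) (m + n - 1),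
      pc p j (pc n i H F) G := by
  rw [br2_eq]
  cases m with
  | zero => simp
  | succ m =>
    rw [sum_range_succ, Ico_eq_empty (by omega), sum_empty, add_zero, Nat.add_sub_cancel]
    refine sum_congr rfl fun i hi => ?_
    rw [mem_range] at hi
    congr 1
    ext j
    simp only [mem_Icc, mem_Ico]
    omega

lemma expand_E0 (lM : ∀ i, i < 2 → SlotLin i M) :
    br2 (m + 1) n p (pc m 0 M H) F G = pc (m + n + p - 2) 0 M (br2 m n p H F G)
      + ∑ i ∈ range m, pc p (m + n - 1) (pc (m + n - 1) 0 M (pc n i H F)) G := by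
  rw [br2_eq' m, br2_eq, pc_sum_right (lM 0 (by omega)), ← sum_add_distrib, Nat.add_sub_cancel]
  refine sum_congr rfl fun i hi => ?_
  rw [mem_range] at hi
  have e1 : pc n i (pc m 0 M H) F = pc (m + n - 1) 0 M (pc n i H F) := by
    have := pc_nest (n := m) (p := n) (q := m + n - 1) (i := 0) (l := i) H F hi (lM 0 (by omega))
      (by omega)
    rwa [zero_add] at this
  rw [e1, pc_sum_right (lM 0 (by omega)),
    show Icc (i + n) (m + 1 + n - 2) = Ico (i + n) (m + n - 1 + 1) by
      ext j; simp only [mem_Icc, mem_Ico]; omega,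
    sum_Ico_succ_top (by omega)]
  congr 1
  refine sum_congr rfl fun j hj => ?_
  rw [mem_Ico] at hj
  have := pc_nest (n := m + n - 1) (p := p) (q := m + n + p - 2) (i := 0) (l := j) (pc n i H F) G
    (by omega) (lM 0 (by omega)) (by omega)
  rwa [zero_add] at this

lemma expand_E1 (lM : ∀ i, i < 2 → SlotLin i M) (dF : Dep n F) :
    br2 (m + 1) n p (pc m 1 M H) F G = pc (m + n + p - 2) 1 M (br2 m n p H F G)
      + sgn (((m : ℤ) - 1) * ((n : ℤ) - 1)) •
        ∑ l ∈ range m, pc (m + p - 1) n (pc n 0 M F) (pc p l H G) := by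
  rw [br2_eq m, br2_eq, pc_sum_right (lM 1 (by omega)), Nat.add_sub_cancel]
  cases m with
  | zero => simp
  | succ m =>
    rw [sum_range_succ', Nat.add_sub_cancel]
    congr 1
    · refine sum_congr rfl fun i hi => ?_
      rw [mem_range] at hi
      have e1 : pc n (i + 1) (pc (m + 1) 1 M H) F = pc (m + n) 1 M (pc n i H F) := by
        rw [add_comm i 1]
        exact pc_nest (n := m + 1) (p := n) (q := m + n) (i := 1) (l := i) H F (by omega)
          (lM 1 (by omega)) (by omega)
      rw [e1, pc_sum_right (lM 1 (by omega))]
      refine sum_nbij' (fun j => j - 1) (fun j => j + 1) ?_ ?_ ?_ ?_ ?_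
      all_goals
        intro j hj
        simp only [mem_Icc] at hj ⊢
        try omega
      obtain ⟨j', rfl⟩ : ∃ j', j = j' + 1 := ⟨j - 1, by omega⟩
      rw [Nat.add_sub_cancel, add_comm j' 1]
      exact pc_nest (n := m + n) (p := p) (q := m + 1 + n + p - 2) (i := 1) (l := j') _ G
        (by omega) (lM 1 (by omega)) (by omega)
    · have hl : SlotLin n (pc n 0 M F) := slotLin_pc dF (by omega) (lM _ (by omega))
      rw [pc_par' H dF (by omega), show 1 + n - 1 = n by omega, smul_sum]
      refine sum_nbij' (fun j => j - n) (fun j => j + n) ?_ ?_ ?_ ?_ ?_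
      all_goals
        intro j hj
        simp only [mem_Icc, mem_range] at hj ⊢
        try omega
      obtain ⟨j', rfl⟩ : ∃ j', j = n + j' := ⟨j - n, by omega⟩
      rw [Nat.add_sub_cancel_left, pc_smul_left]
      congr 1
      exact pc_nest (n := m + 1) (p := p) _ G
        (by omega) hl (by omega)

lemma br2_add_left (H' : (ℕ → L) → L) :
    br2 m n p (H + H') F G = br2 m n p H F G + br2 m n p H' F G := by
  simp only [br2_eq, pc_add_left, sum_add_distrib]

lemma expand_E (lM : ∀ i, i < 2 → SlotLin i M) (dF : Dep n F) :
    br2 (m + 1) n p (tc 2 m M H) F G = tc 2 (m + n + p - 2) M (br2 m n p H F G)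
      + (∑ i ∈ range m, pc p (m + n - 1) (pc (m + n - 1) 0 M (pc n i H F)) G)
      + sgn (((m : ℤ) - 1) * ((n : ℤ) - 1)) •
        ∑ l ∈ range m, pc (m + p - 1) n (pc n 0 M F) (pc p l H G) := by
  rw [tc_eq, tc_eq, sum_range_succ, sum_range_one, sum_range_succ, sum_range_one, br2_add_left,
    expand_E0 lM, expand_E1 lM dF]
  abel

lemma expand_F (lM : ∀ i, i < 2 → SlotLin i M) (dF : Dep n F) (dH : Dep m H) :
    tc (n + p) m (pc p n (pc n 0 M F) G) H
      = sgn (((m : ℤ) - 1) * ((p : ℤ) - 1)) •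
          (∑ k ∈ range n, pc p (m + n - 1) (pc (m + n - 1) 0 M (pc m k F H)) G)
        + ∑ l ∈ range p, pc (m + p - 1) n (pc n 0 M F) (pc m l G H) := by
  rw [tc_eq, sum_range_add, smul_sum]
  congr 1
  · refine sum_congr rfl fun k hk => ?_
    rw [mem_range] at hk
    have := pc_nest (n := n) (p := m) (q := m + n - 1) (i := 0) (l := k) F H
      hk (lM 0 (by omega)) (by omega)
    rw [zero_add] at this
    rw [pc_par' G dH hk, this, show n + m - 1 = m + n - 1 by omega, mul_comm]
  · refine sum_congr rfl fun k hk => ?_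
    rw [mem_range] at hk
    have hl : SlotLin n (pc n 0 M F) := slotLin_pc dF (by omega) (lM _ (by omega))
    exact pc_nest (n := p) (p := m) G H hk hl (by omega)

lemma br2_left (c : ℤ) (H' : (ℕ → L) → L) :
    br2 m n p (-(H - c • H')) F G = - (br2 m n p H F G - c • br2 m n p H' F G) := by
  simp only [br2_eq, pc_neg_left, pc_sub_left, pc_smul_left, sum_neg_distrib, sum_sub_distrib,
    smul_sum]

lemma br2_mid (hH : ∀ i, i < m → SlotLin i H) (c : ℤ) (F' : (ℕ → L) → L) :
    br2 m n p H (-(F - c • F')) G = - (br2 m n p H F G - c • br2 m n p H F' G) := by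
  simp only [br2_eq, smul_sum, ← sum_sub_distrib, ← sum_neg_distrib]
  refine sum_congr rfl fun i hi => sum_congr rfl fun j hj => ?_
  rw [mem_range] at hi
  have hl := hH i (by omega)
  rw [pc_neg_right hl, pc_sub_right hl, pc_smul_right hl, pc_neg_left, pc_sub_left, pc_smul_left]

lemma br2_right (hH : ∀ i, i < m → SlotLin i H) (dF : Dep n F) (c : ℤ) (G' : (ℕ → L) → L) :
    br2 m n p H F (-(G - c • G')) = - (br2 m n p H F G - c • br2 m n p H F G') := by
  simp only [br2_eq, smul_sum, ← sum_sub_distrib, ← sum_neg_distrib]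
  refine sum_congr rfl fun i hi => sum_congr rfl fun j hj => ?_
  simp only [mem_range, mem_Icc] at hi hj
  have hl : SlotLin j (pc n i H F) := slotLin_pc dF hj.1 (hH _ (by omega))
  rw [pc_neg_right hl, pc_sub_right hl, pc_smul_right hl]

end W

lemma cup_left (μ : C K L 2) {m n p : ℕ} (H F G : (ℕ → L) → L) :
    cup μ (m + n - 1) p (gb m n H F) G = sgn ((m : ℤ) + n - 1) •
      ((∑ i ∈ range m, pc p (m + n - 1) (pc (m + n - 1) 0 (ex μ) (pc n i H F)) G)
        - sgn (((m : ℤ) - 1) * ((n : ℤ) - 1)) •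
          ∑ k ∈ range n, pc p (m + n - 1) (pc (m + n - 1) 0 (ex μ) (pc m k F H)) G) := by
  have hl : SlotLin 0 (ex μ) := slotLin_ex μ (by omega)
  rw [cup_eq, gb_eq, tc_eq, tc_eq, pc_sub_right hl, pc_smul_right hl, pc_sum_right hl,
    pc_sum_right hl, pc_sub_left, pc_smul_left, pc_sum_left, pc_sum_left]
  by_cases h : m + n = 0
  · obtain ⟨rfl, rfl⟩ : m = 0 ∧ n = 0 := by omega
    simp
  · congr 2
    omega

lemma cup_right (μ : C K L 2) {m n p : ℕ} (H F G : (ℕ → L) → L) (dF : Dep n F) :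
    cup μ n (m + p - 1) F (gb m p H G) = sgn (n : ℤ) •
      ((∑ l ∈ range m, pc (m + p - 1) n (pc n 0 (ex μ) F) (pc p l H G))
        - sgn (((m : ℤ) - 1) * ((p : ℤ) - 1)) •
          ∑ l ∈ range p, pc (m + p - 1) n (pc n 0 (ex μ) F) (pc m l G H)) := by
  have hl : SlotLin n (pc n 0 (ex μ) F) :=
    slotLin_pc dF (by omega) (slotLin_ex μ (by omega))
  rw [cup_eq, gb_eq, tc_eq, tc_eq, pc_sub_right hl, pc_smul_right hl, pc_sum_right hl,
    pc_sum_right hl]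

lemma gb_cup (μ : C K L 2) {m n p : ℕ} (h : C K L m) (F G : (ℕ → L) → L) :
    gb m (n + p) (ex h) (cup μ n p F G) = sgn (n : ℤ) •
      (tc m (n + p) (ex h) (pc p n (pc n 0 (ex μ) F) G)
        - sgn (((m : ℤ) - 1) * ((n : ℤ) + p - 1)) •
          tc (n + p) m (pc p n (pc n 0 (ex μ) F) G) (ex h)) := by
  rw [gb_eq, cup_eq, smul_sub]
  congr 1
  · rw [tc_eq, tc_eq, smul_sum]
    refine sum_congr rfl fun i hi => ?_
    rw [pc_smul_right (slotLin_ex h (mem_range.mp hi))]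
  · rw [smul_comm, Nat.cast_add]
    congr 1
    rw [tc_eq, tc_eq, smul_sum]
    exact sum_congr rfl fun i hi => pc_smul_left _ _ _ _ _

lemma delta_br2 (μ : C K L 2) {m n p : ℕ} (H F G : (ℕ → L) → L) :
    delta μ (m + n + p - 2) (br2 m n p H F G) =
      - (tc (m + n + p - 2) 2 (br2 m n p H F G) (ex μ)
        - sgn ((m : ℤ) + n + p - 1) • tc 2 (m + n + p - 2) (ex μ) (br2 m n p H F G)) := by
  rw [delta_eq]
  by_cases hm : 2 ≤ m
  · congr 3
    apply sgn_congr
    rw [show ((m + n + p - 2 : ℕ) : ℤ) = m + n + p - 2 by omega]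
    simp [Int.even_add, Int.even_sub]
  · have : br2 m n p H F G = 0 := by
      rw [br2_eq, show m - 1 = 0 by omega, sum_range_zero]
    have h0 : tc 2 (m + n + p - 2) (ex μ) (br2 m n p H F G) = 0 := by
      rw [this, tc_eq]
      exact sum_eq_zero fun i hi => pc_zero_right (slotLin_ex μ (mem_range.mp hi))
    rw [h0, smul_zero, smul_zero]

/-- the operadic Stokes law for Gerstenhaber brackets
`δ̄⟨h|fg⟩ = (-1)^{|g|} ([h,f] ⌣ g + (-1)^{|h| deg f} f ⌣ [h,g] − [h, f ⌣ g])`. -/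
theorem operadic_stokes_law_for_gerstenhaber_brackets
    (μ : C K L 2) {m n p : ℕ} (h : C K L m) (f : C K L n) (g : C K L p) :
    delta μ (m + n + p - 2) (br2 m n p (ex h) (ex f) (ex g))
        - br2 m n (p + 1) (ex h) (ex f) (delta μ p (ex g))
        - sgn ((p : ℤ) - 1) • br2 m (n + 1) p (ex h) (delta μ n (ex f)) (ex g)
        - sgn (((p : ℤ) - 1) + ((n : ℤ) - 1)) •
            br2 (m + 1) n p (delta μ m (ex h)) (ex f) (ex g)
      = sgn ((p : ℤ) - 1) •
          (cup μ (m + n - 1) p (gb m n (ex h) (ex f)) (ex g)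
            + sgn (((m : ℤ) - 1) * (n : ℤ)) •
                cup μ n (m + p - 1) (ex f) (gb m p (ex h) (ex g))
            - gb m (n + p) (ex h) (cup μ n p (ex f) (ex g))) := by
  have hH : ∀ i, i < m → SlotLin i (ex h) := fun i hi => slotLin_ex h hi
  have lM : ∀ i, i < 2 → SlotLin i (ex μ) := fun i hi => slotLin_ex μ hi
  have dM := dep_ex μ
  have dH := dep_ex h
  have dF := dep_ex f
  have dG := dep_ex g
  rw [delta_br2, delta_eq, delta_eq, delta_eq, br2_left, br2_mid hH, br2_right hH dF, cup_left,
    cup_right μ _ _ _ dF, gb_cup, expand_A, expand_B hH dF, expand_C hH dM,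
    expand_D hH dM dF dG, expand_E lM dF, expand_F lM dF dH]
  by_cases hm : Even m <;> by_cases hn : Even n <;> by_cases hp : Even p <;>
    simp only [sgn_eq_ite, Int.even_add, Int.even_sub, Int.even_mul, Int.even_coe_nat, hm, hn, hp,
      Int.not_even_one, even_two, Nat.cast_ofNat, if_true, if_false, iff_true, iff_false, true_iff,
      false_iff, not_true_eq_false, not_false_eq_true, or_true, or_false, true_or, false_or,
      one_smul, neg_smul] <;>
    abel



end OperadPrelude
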